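/- arXiv:1003.0646 — 2 statements merged into one kernel-verified Lean document; each statement's English description precedes it below -/
import Mathlib

section
/- Let n ≥ 1, let D ⊂ ℝ^n be a nonempty bounded convex open set, and let γ ∈ [0, n+2). Then there exists a constant C > 0, depending on D and γ, such that for every smooth function v : ℝ^n → ℝ one has ∫_D ∫_D |v(x) − v(y)|² / |x − y|^γ dx dy ≤ C · ∫_D |∇v(z)|² dz. Moreover, for γ = 0 one may take C = C_n · vol(D) · diam(D)², with C_n depending only on n. -/
open MeasureTheory
open scoped ENNReal

/-!
By the Cauchy-Schwarz inequality, `|v x - v y|²` is at most `|x - y|²` times the mean of `|∇v|²`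
along the segment from `x` to `y`, and by convexity `|∇v|²` may be replaced off `D` by zero. For
the weighted estimate, substitute `y = x + h` and integrate in `x` first: translation invariance
leaves `∫_D |∇v|²` times the integral of `|h|^(2 - γ)` over a ball, which is finite because
`γ < n + 2`. For `γ = 0` this constant would be of order `diam(D)^(n + 2)`; to have `vol(D)` instead
of `diam(D)^n`, use that exchanging `x` and `y` exchanges `t` and `1 - t`, so that only the points
`(1 - t) x + t y` with `t ≥ 1/2` matter, and `y ↦ (1 - t) x + t y` distorts volumes by a factor
`tⁿ ≥ 2⁻ⁿ`.
-/

open Set Metric Module AffineMap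

lemma pow_lintegral_le_lintegral_pow {α : Type*} [MeasurableSpace α] {μ : Measure α}
    [IsProbabilityMeasure μ] {f : α → ℝ≥0∞} (hf : AEMeasurable f μ) {n : ℕ} (hn : n ≠ 0) :
    (∫⁻ a, f a ∂μ) ^ n ≤ ∫⁻ a, f a ^ n ∂μ := by
  have hn1 : (1 : ℝ) ≤ n := by exact_mod_cast Nat.one_le_iff_ne_zero.2 hn
  have h := eLpNorm'_le_eLpNorm'_of_exponent_le one_pos hn1 μ hf.aestronglyMeasurable
  simp only [eLpNorm', enorm_eq_self, ENNReal.rpow_one, ENNReal.rpow_natCast, div_one] at h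
  rwa [one_div, ENNReal.le_rpow_inv_iff (by positivity), ENNReal.rpow_natCast] at h

lemma enorm_sub_le_lintegral_enorm_deriv {F : Type*} [NormedAddCommGroup F] [NormedSpace ℝ F]
    [CompleteSpace F] {f : ℝ → F} {a b : ℝ} (hab : a ≤ b)
    (hfc : ContinuousOn f (Icc a b)) (hfd : DifferentiableOn ℝ f (Ioo a b)) :
    ‖f b - f a‖ₑ ≤ ∫⁻ t in Icc a b, ‖deriv f t‖ₑ := by
  by_cases hfin : ∫⁻ t in Icc a b, ‖deriv f t‖ₑ = ∞
  · simp [hfin]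
  have hint : IntegrableOn (deriv f) (Icc a b) :=
    ⟨aestronglyMeasurable_deriv f _, lt_top_iff_ne_top.2 hfin⟩
  have hle : ‖f b - f a‖ ≤ ∫ t in Icc a b, ‖deriv f t‖ := by
    rw [integral_Icc_eq_integral_Ioc, ← intervalIntegral.integral_of_le hab]
    exact norm_sub_le_integral_of_norm_deriv_le_of_le hab hfc hfd (.of_forall fun _ _ => le_rfl)
      ((intervalIntegrable_iff_integrableOn_Icc_of_le hab).2 hint.norm)
  rw [← ofReal_norm, ← ofReal_integral_norm_eq_lintegral_enorm hint]
  exact ENNReal.ofReal_le_ofReal hle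

section SegmentMean

/-- The mean of `g` along the segment from `x` to `y`, parametrised at constant speed on `[0, 1]`,
so that `segmentMean g x x = g x`. -/
noncomputable def segmentMean {E : Type*} [AddCommGroup E] [Module ℝ E]
    (g : E → ℝ≥0∞) (x y : E) : ℝ≥0∞ :=
  ∫⁻ t in Icc (0 : ℝ) 1, g (lineMap x y t)

lemma segmentMean_congr {E : Type*} [AddCommGroup E] [Module ℝ E] {g₁ g₂ : E → ℝ≥0∞} {x y : E}
    (h : EqOn g₁ g₂ (segment ℝ x y)) : segmentMean g₁ x y = segmentMean g₂ x y :=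
  setLIntegral_congr_fun measurableSet_Icc fun _ ht => h (lineMap_mem_segment ℝ x y ht)

lemma enorm_sub_sq_le_enorm_sq_mul_segmentMean {E F : Type*} [NormedAddCommGroup E]
    [NormedSpace ℝ E] [NormedAddCommGroup F] [NormedSpace ℝ F] [CompleteSpace F] {v : E → F}
    {x y : E} (hv : ∀ z ∈ segment ℝ x y, DifferentiableAt ℝ v z) :
    ‖v x - v y‖ₑ ^ 2 ≤ ‖x - y‖ₑ ^ 2 * segmentMean (fun z => ‖fderiv ℝ v z‖ₑ ^ 2) x y := by
  set f : ℝ → F := fun t => v (lineMap x y t)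
  have hderiv : ∀ t ∈ Icc (0 : ℝ) 1,
      HasDerivAt f (fderiv ℝ v (lineMap x y t) (y - x)) t := fun t ht =>
    (hv _ (lineMap_mem_segment ℝ x y ht)).hasFDerivAt.comp_hasDerivAt t hasDerivAt_lineMap
  have : IsProbabilityMeasure (volume.restrict (Icc (0 : ℝ) 1)) := ⟨by simp⟩
  calc ‖v x - v y‖ₑ ^ 2 = ‖f 1 - f 0‖ₑ ^ 2 := by simp [f, enorm_sub_rev (v x)]
    _ ≤ (∫⁻ t in Icc (0 : ℝ) 1, ‖deriv f t‖ₑ) ^ 2 := by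
        gcongr
        exact enorm_sub_le_lintegral_enorm_deriv zero_le_one
          (fun t ht => (hderiv t ht).continuousAt.continuousWithinAt)
          (fun t ht => (hderiv t (Ioo_subset_Icc_self ht)).differentiableAt.differentiableWithinAt)
    _ ≤ ∫⁻ t in Icc (0 : ℝ) 1, ‖deriv f t‖ₑ ^ 2 :=
        pow_lintegral_le_lintegral_pow (aestronglyMeasurable_deriv f _).enorm two_ne_zero
    _ ≤ ∫⁻ t in Icc (0 : ℝ) 1, ‖x - y‖ₑ ^ 2 * ‖fderiv ℝ v (lineMap x y t)‖ₑ ^ 2 := by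
        refine setLIntegral_mono' measurableSet_Icc fun t ht => ?_
        rw [(hderiv t ht).deriv, ← mul_pow, mul_comm, enorm_sub_rev x]
        gcongr
        exact ContinuousLinearMap.le_opENorm _ _
    _ = ‖x - y‖ₑ ^ 2 * segmentMean (fun z => ‖fderiv ℝ v z‖ₑ ^ 2) x y :=
        lintegral_const_mul' _ _ (by finiteness)

variable {E : Type*} [AddCommGroup E] [Module ℝ E] [MeasurableSpace E] [MeasurableAdd₂ E]
  [MeasurableSMul₂ ℝ E] {g : E → ℝ≥0∞}

lemma lintegral_segmentMean_add_right (μ : Measure E) [SFinite μ] [μ.IsAddRightInvariant]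
    (hg : Measurable g) (h : E) :
    ∫⁻ x, segmentMean g x (x + h) ∂μ = ∫⁻ z, g z ∂μ := by
  have hmeas : Measurable fun p : E × ℝ => g (p.1 + p.2 • h) := by fun_prop
  calc ∫⁻ x, segmentMean g x (x + h) ∂μ
      = ∫⁻ x, (∫⁻ t : ℝ in Icc 0 1, g (x + t • h)) ∂μ := by
        simp only [segmentMean, lineMap_apply_module', add_sub_cancel_left, add_comm (_ • h)]
    _ = ∫⁻ t : ℝ in Icc 0 1, (∫⁻ x, g (x + t • h) ∂μ) :=
        lintegral_lintegral_swap hmeas.aemeasurable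
    _ = ∫⁻ z, g z ∂μ := by simp [lintegral_add_right_eq_self g]

variable [MeasurableSub₂ E]

variable {α : Type*} [MeasurableSpace α] {x y : α → E}

@[fun_prop]
lemma measurable_lineMap (hx : Measurable x) (hy : Measurable y) {t : α → ℝ} (ht : Measurable t) :
    Measurable fun a => lineMap (x a) (y a) (t a) := by
  simp only [lineMap_apply_module']
  fun_prop

@[fun_prop]
lemma measurable_segmentMean (hg : Measurable g) (hx : Measurable x) (hy : Measurable y) :
    Measurable fun a => segmentMean g (x a) (y a) := by
  unfold segmentMean
  fun_prop

lemma lintegral_lintegral_mul_segmentMean (μ : Measure E) [SFinite μ] [μ.IsAddRightInvariant]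
    {k : E → ℝ≥0∞} (hk : Measurable k) (hg : Measurable g) :
    ∫⁻ x, ∫⁻ y, k (y - x) * segmentMean g x y ∂μ ∂μ = (∫⁻ h, k h ∂μ) * ∫⁻ z, g z ∂μ := by
  calc ∫⁻ x, ∫⁻ y, k (y - x) * segmentMean g x y ∂μ ∂μ
      = ∫⁻ x, ∫⁻ h, k h * segmentMean g x (x + h) ∂μ ∂μ := by
        refine lintegral_congr fun x => ?_
        simpa only [add_sub_cancel] using
          lintegral_sub_right_eq_self (fun h => k h * segmentMean g x (x + h)) x
    _ = ∫⁻ h, ∫⁻ x, k h * segmentMean g x (x + h) ∂μ ∂μ :=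
        lintegral_lintegral_swap (by fun_prop)
    _ = ∫⁻ h, k h * ∫⁻ z, g z ∂μ ∂μ := by
        refine lintegral_congr fun h => ?_
        rw [lintegral_const_mul _ (by fun_prop), lintegral_segmentMean_add_right μ hg]
    _ = (∫⁻ h, k h ∂μ) * ∫⁻ z, g z ∂μ := lintegral_mul_const _ hk

end SegmentMean

section AddHaar

variable {E : Type*} [NormedAddCommGroup E] [NormedSpace ℝ E] [FiniteDimensional ℝ E]
  [MeasurableSpace E] [BorelSpace E] (μ : Measure E) [μ.IsAddHaarMeasure] {g : E → ℝ≥0∞}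

lemma lintegral_comp_lineMap (hg : Measurable g) (x : E) {t : ℝ} (ht : t ≠ 0) :
    ∫⁻ y, g (lineMap x y t) ∂μ = ENNReal.ofReal |(t ^ finrank ℝ E)⁻¹| * ∫⁻ z, g z ∂μ := by
  calc ∫⁻ y, g (lineMap x y t) ∂μ = ∫⁻ z, g ((1 - t) • x + z) ∂(μ.map (t • ·)) := by
        simp only [lineMap_apply_module]
        rw [lintegral_map (by fun_prop) (by fun_prop)]
    _ = ENNReal.ofReal |(t ^ finrank ℝ E)⁻¹| * ∫⁻ z, g z ∂μ := by
        rw [Measure.map_addHaar_smul μ ht, lintegral_smul_measure, lintegral_add_left_eq_self,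
          smul_eq_mul]

lemma lintegral_comp_lineMap_le (hg : Measurable g) (x : E) {t : ℝ} (ht : 1 / 2 ≤ t) :
    ∫⁻ y, g (lineMap x y t) ∂μ ≤ 2 ^ finrank ℝ E * ∫⁻ z, g z ∂μ := by
  have ht0 : 0 < t := by linarith
  have hinv : t⁻¹ ≤ 2 := inv_le_of_inv_le₀ two_pos (by simpa using ht)
  rw [lintegral_comp_lineMap μ hg x ht0.ne', abs_of_nonneg (by positivity), ← inv_pow,
    ENNReal.ofReal_pow (by positivity)]
  gcongr
  simpa using ENNReal.ofReal_le_ofReal hinv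

lemma setLIntegral_setLIntegral_comp_lineMap_le (hg : Measurable g) (D : Set E) {t : ℝ}
    (ht : 1 / 2 ≤ t) :
    ∫⁻ x in D, ∫⁻ y in D, g (lineMap x y t) ∂μ ∂μ ≤
      2 ^ finrank ℝ E * μ D * ∫⁻ z, g z ∂μ := by
  calc ∫⁻ x in D, ∫⁻ y in D, g (lineMap x y t) ∂μ ∂μ
      ≤ ∫⁻ _ in D, 2 ^ finrank ℝ E * ∫⁻ z, g z ∂μ ∂μ := by
        gcongr with x
        exact (setLIntegral_le_lintegral _ _).trans (lintegral_comp_lineMap_le μ hg x ht)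
    _ = 2 ^ finrank ℝ E * μ D * ∫⁻ z, g z ∂μ := by
        rw [setLIntegral_const, mul_right_comm]

lemma setLIntegral_setLIntegral_segmentMean_le (hg : Measurable g) (D : Set E) :
    ∫⁻ x in D, ∫⁻ y in D, segmentMean g x y ∂μ ∂μ ≤
      2 ^ finrank ℝ E * μ D * ∫⁻ z, g z ∂μ := by
  have hslice : ∀ t : ℝ, ∫⁻ x in D, ∫⁻ y in D, g (lineMap x y t) ∂μ ∂μ ≤
      2 ^ finrank ℝ E * μ D * ∫⁻ z, g z ∂μ := by
    intro t
    rcases le_total (1 / 2) t with ht | ht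
    · exact setLIntegral_setLIntegral_comp_lineMap_le μ hg D ht
    · rw [lintegral_lintegral_swap (by fun_prop)]
      simp only [← lineMap_apply_one_sub (k := ℝ) _ _ t]
      exact setLIntegral_setLIntegral_comp_lineMap_le μ hg D (by linarith)
  calc ∫⁻ x in D, ∫⁻ y in D, segmentMean g x y ∂μ ∂μ
      = ∫⁻ x in D, (∫⁻ t : ℝ in Icc 0 1, (∫⁻ y in D, g (lineMap x y t) ∂μ)) ∂μ :=
        lintegral_congr fun x => lintegral_lintegral_swap (by fun_prop)
    _ = ∫⁻ t : ℝ in Icc 0 1, (∫⁻ x in D, ∫⁻ y in D, g (lineMap x y t) ∂μ ∂μ) :=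
        lintegral_lintegral_swap (by fun_prop)
    _ ≤ ∫⁻ _ : ℝ in Icc 0 1, (2 ^ finrank ℝ E * μ D * ∫⁻ z, g z ∂μ) := lintegral_mono hslice
    _ = 2 ^ finrank ℝ E * μ D * ∫⁻ z, g z ∂μ := by simp

lemma integrableOn_norm_rpow_ball {s : ℝ} (hs : -(finrank ℝ E : ℝ) < s) (R : ℝ) :
    IntegrableOn (fun x : E => ‖x‖ ^ s) (ball 0 R) μ := by
  rcases subsingleton_or_nontrivial E with hE | hE
  · simp only [Subsingleton.elim _ (0 : E)]
    exact integrableOn_const measure_ball_lt_top.ne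
  rcases le_or_gt R 0 with hR | hR
  · simp [ball_eq_empty.2 hR]
  rw [integrableOn_fun_norm_addHaar μ (f := fun r => r ^ s)]
  refine ((intervalIntegral.integrableOn_Ioo_rpow_iff hR).2
    (by linarith : -1 < (finrank ℝ E : ℝ) - 1 + s)).congr_fun (fun r hr => ?_) measurableSet_Ioo
  change r ^ ((finrank ℝ E : ℝ) - 1 + s) = r ^ (finrank ℝ E - 1) • r ^ s
  rw [Real.rpow_add hr.1, ← Nat.cast_pred finrank_pos, Real.rpow_natCast, smul_eq_mul]

end AddHaar

section Convex

variable {E F : Type*} [NormedAddCommGroup E] [NormedSpace ℝ E] [NormedAddCommGroup F]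
  [NormedSpace ℝ F] {D : Set E} {v : E → F}

/-- The density of the Dirichlet energy of `v` on `D`, extended by `0` to the whole space so that
it may be translated and dilated freely. -/
noncomputable def dirichletDensity (D : Set E) (v : E → F) : E → ℝ≥0∞ :=
  D.indicator fun z => ENNReal.ofReal (‖fderiv ℝ v z‖ ^ 2)

lemma measurable_dirichletDensity [CompleteSpace F] [MeasurableSpace E] [OpensMeasurableSpace E]
    (hD : MeasurableSet D) (v : E → F) : Measurable (dirichletDensity D v) :=
  Measurable.indicator ((measurable_fderiv ℝ v).norm.pow_const 2).ennreal_ofReal hD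

lemma ofReal_norm_sub_sq_le_mul_segmentMean [CompleteSpace F] (ho : IsOpen D) (hc : Convex ℝ D)
    (hv : DifferentiableOn ℝ v D) {x y : E} (hx : x ∈ D) (hy : y ∈ D) :
    ENNReal.ofReal (‖v x - v y‖ ^ 2) ≤
      ENNReal.ofReal (‖x - y‖ ^ 2) * segmentMean (dirichletDensity D v) x y := by
  have hseg : segment ℝ x y ⊆ D := hc.segment_subset hx hy
  have hmean : segmentMean (fun z => ‖fderiv ℝ v z‖ₑ ^ 2) x y =
      segmentMean (dirichletDensity D v) x y := segmentMean_congr fun z hz => by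
    simp [dirichletDensity, hseg hz, ENNReal.ofReal_pow]
  have h := enorm_sub_sq_le_enorm_sq_mul_segmentMean (x := x) (y := y) fun z hz =>
    hv.differentiableAt (ho.mem_nhds (hseg hz))
  simpa [ENNReal.ofReal_pow, hmean] using h

lemma ofReal_norm_sub_sq_div_rpow_le_mul_segmentMean [CompleteSpace F] (ho : IsOpen D)
    (hc : Convex ℝ D) (hv : DifferentiableOn ℝ v D) {x y : E} (hx : x ∈ D) (hy : y ∈ D) (γ : ℝ) :
    ENNReal.ofReal (‖v x - v y‖ ^ 2 / ‖x - y‖ ^ γ) ≤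
      ENNReal.ofReal (‖x - y‖ ^ (2 - γ)) * segmentMean (dirichletDensity D v) x y := by
  rcases eq_or_ne x y with rfl | hxy
  · simp
  have hpos : 0 < ‖x - y‖ := norm_sub_pos_iff.2 hxy
  rw [Real.rpow_sub hpos, Real.rpow_two, ENNReal.ofReal_div_of_pos (by positivity),
    ENNReal.ofReal_div_of_pos (by positivity), ← ENNReal.mul_div_right_comm]
  gcongr
  exact ofReal_norm_sub_sq_le_mul_segmentMean ho hc hv hx hy

variable [CompleteSpace F] [FiniteDimensional ℝ E] [MeasurableSpace E] [BorelSpace E]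
  (μ : Measure E) [μ.IsAddHaarMeasure]

theorem setLIntegral_setLIntegral_norm_sub_sq_div_rpow_le (ho : IsOpen D) (hc : Convex ℝ D)
    (hb : Bornology.IsBounded D) (hv : DifferentiableOn ℝ v D) {R : ℝ} (hR : diam D < R) (γ : ℝ) :
    ∫⁻ x in D, ∫⁻ y in D, ENNReal.ofReal (‖v x - v y‖ ^ 2 / ‖x - y‖ ^ γ) ∂μ ∂μ ≤
      (∫⁻ h in ball 0 R, ENNReal.ofReal (‖h‖ ^ (2 - γ)) ∂μ) *
        ∫⁻ z in D, ENNReal.ofReal (‖fderiv ℝ v z‖ ^ 2) ∂μ := by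
  set k : E → ℝ≥0∞ := (ball 0 R).indicator fun h => ENNReal.ofReal (‖h‖ ^ (2 - γ))
  have hk : Measurable k := Measurable.indicator (by fun_prop) measurableSet_ball
  have hkey : ∀ x ∈ D, ∀ y ∈ D, ENNReal.ofReal (‖v x - v y‖ ^ 2 / ‖x - y‖ ^ γ) ≤
      k (y - x) * segmentMean (dirichletDensity D v) x y := by
    intro x hx y hy
    have hmem : y - x ∈ ball 0 R := by
      rw [mem_ball_zero_iff, ← dist_eq_norm]
      exact (dist_le_diam_of_mem hb hy hx).trans_lt hR
    have hk_apply : k (y - x) = ENNReal.ofReal (‖x - y‖ ^ (2 - γ)) := by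
      rw [norm_sub_rev]
      exact indicator_of_mem hmem _
    rw [hk_apply]
    exact ofReal_norm_sub_sq_div_rpow_le_mul_segmentMean ho hc hv hx hy γ
  calc ∫⁻ x in D, ∫⁻ y in D, ENNReal.ofReal (‖v x - v y‖ ^ 2 / ‖x - y‖ ^ γ) ∂μ ∂μ
      ≤ ∫⁻ x in D, ∫⁻ y in D, k (y - x) * segmentMean (dirichletDensity D v) x y ∂μ ∂μ :=
        setLIntegral_mono' ho.measurableSet fun x hx =>
          setLIntegral_mono' ho.measurableSet fun y hy => hkey x hx y hy
    _ ≤ ∫⁻ x, ∫⁻ y, k (y - x) * segmentMean (dirichletDensity D v) x y ∂μ ∂μ :=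
        (setLIntegral_le_lintegral _ _).trans
          (lintegral_mono fun x => setLIntegral_le_lintegral _ _)
    _ = (∫⁻ h, k h ∂μ) * ∫⁻ z, dirichletDensity D v z ∂μ :=
        lintegral_lintegral_mul_segmentMean μ hk (measurable_dirichletDensity ho.measurableSet v)
    _ = _ := by
        rw [lintegral_indicator measurableSet_ball, dirichletDensity,
          lintegral_indicator ho.measurableSet]

theorem setLIntegral_setLIntegral_norm_sub_sq_le (ho : IsOpen D) (hc : Convex ℝ D)
    (hb : Bornology.IsBounded D) (hv : DifferentiableOn ℝ v D) :
    ∫⁻ x in D, ∫⁻ y in D, ENNReal.ofReal (‖v x - v y‖ ^ 2) ∂μ ∂μ ≤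
      ENNReal.ofReal (2 ^ finrank ℝ E * μ.real D * diam D ^ 2) *
        ∫⁻ z in D, ENNReal.ofReal (‖fderiv ℝ v z‖ ^ 2) ∂μ := by
  have hkey : ∀ x ∈ D, ∀ y ∈ D, ENNReal.ofReal (‖v x - v y‖ ^ 2) ≤
      ENNReal.ofReal (diam D ^ 2) * segmentMean (dirichletDensity D v) x y := by
    intro x hx y hy
    refine (ofReal_norm_sub_sq_le_mul_segmentMean ho hc hv hx hy).trans ?_
    gcongr
    exact dist_eq_norm x y ▸ dist_le_diam_of_mem hb hx hy
  calc ∫⁻ x in D, ∫⁻ y in D, ENNReal.ofReal (‖v x - v y‖ ^ 2) ∂μ ∂μ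
      ≤ ∫⁻ x in D, ∫⁻ y in D,
          ENNReal.ofReal (diam D ^ 2) * segmentMean (dirichletDensity D v) x y ∂μ ∂μ :=
        setLIntegral_mono' ho.measurableSet fun x hx =>
          setLIntegral_mono' ho.measurableSet fun y hy => hkey x hx y hy
    _ = ENNReal.ofReal (diam D ^ 2) *
          ∫⁻ x in D, ∫⁻ y in D, segmentMean (dirichletDensity D v) x y ∂μ ∂μ := by
        simp only [lintegral_const_mul' _ _ ENNReal.ofReal_ne_top]
    _ ≤ ENNReal.ofReal (diam D ^ 2) *
          (2 ^ finrank ℝ E * μ D * ∫⁻ z, dirichletDensity D v z ∂μ) := by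
        gcongr
        exact setLIntegral_setLIntegral_segmentMean_le μ
          (measurable_dirichletDensity ho.measurableSet v) D
    _ = _ := by
        rw [dirichletDensity, lintegral_indicator ho.measurableSet, mul_comm _ (diam D ^ 2),
          ENNReal.ofReal_mul (by positivity), ENNReal.ofReal_mul (by positivity),
          ofReal_measureReal hb.measure_lt_top.ne, ENNReal.ofReal_pow zero_le_two,
          ENNReal.ofReal_ofNat, mul_assoc (ENNReal.ofReal _)]

theorem stmt13_general {γ : ℝ} (hγ : γ < finrank ℝ E + 2) :
    (∀ D : Set E, IsOpen D → Convex ℝ D → Bornology.IsBounded D →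
      ∃ C : ℝ, 0 < C ∧ ∀ v : E → F, DifferentiableOn ℝ v D →
        ∫⁻ x in D, ∫⁻ y in D, ENNReal.ofReal (‖v x - v y‖ ^ 2 / ‖x - y‖ ^ γ) ∂μ ∂μ ≤
          ENNReal.ofReal C * ∫⁻ z in D, ENNReal.ofReal (‖fderiv ℝ v z‖ ^ 2) ∂μ) ∧
    ∃ C : ℝ, 0 < C ∧ ∀ D : Set E, IsOpen D → Convex ℝ D → Bornology.IsBounded D →
      ∀ v : E → F, DifferentiableOn ℝ v D →
        ∫⁻ x in D, ∫⁻ y in D, ENNReal.ofReal (‖v x - v y‖ ^ 2) ∂μ ∂μ ≤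
          ENNReal.ofReal (C * μ.real D * diam D ^ 2) *
            ∫⁻ z in D, ENNReal.ofReal (‖fderiv ℝ v z‖ ^ 2) ∂μ := by
  refine ⟨fun D ho hc hb => ?_, 2 ^ finrank ℝ E, by positivity, fun D ho hc hb v hv =>
    setLIntegral_setLIntegral_norm_sub_sq_le μ ho hc hb hv⟩
  set I := ∫ h in ball 0 (diam D + 1), ‖h‖ ^ (2 - γ) ∂μ
  have hI : ∫⁻ h in ball 0 (diam D + 1), ENNReal.ofReal (‖h‖ ^ (2 - γ)) ∂μ = ENNReal.ofReal I :=
    (ofReal_integral_eq_lintegral_ofReal (integrableOn_norm_rpow_ball μ (by linarith) _)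
      (.of_forall fun h => by positivity)).symm
  have hI0 : 0 ≤ I := integral_nonneg fun h => by positivity
  refine ⟨I + 1, by linarith, fun v hv => ?_⟩
  have h := setLIntegral_setLIntegral_norm_sub_sq_div_rpow_le μ ho hc hb hv (lt_add_one _) γ
  rw [hI] at h
  refine h.trans ?_
  gcongr
  exact (lt_add_one I).le

end Convex

/-- Estimate on convex sets: if `D ⊂ ℝ^n` is a nonempty bounded convex open set and
`γ ∈ [0, n+2)`, there is `C > 0` (depending on `D`, `γ`) such that for every smooth
`v : ℝ^n → ℝ`, `∫_D ∫_D |v(x)−v(y)|²/|x−y|^γ dx dy ≤ C ∫_D |∇v|²`; moreover for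
`γ = 0` one may take `C = C_n · vol(D) · diam(D)²` with `C_n` depending only on `n`. -/
theorem stmt13 (n : ℕ) (hn : 1 ≤ n) (γ : ℝ) (hγ0 : 0 ≤ γ) (hγ : γ < (n : ℝ) + 2) :
    (∀ D : Set (EuclideanSpace ℝ (Fin n)), D.Nonempty → IsOpen D → Convex ℝ D →
        Bornology.IsBounded D →
      ∃ C : ℝ, 0 < C ∧ ∀ v : EuclideanSpace ℝ (Fin n) → ℝ, ContDiff ℝ (⊤ : ℕ∞) v →
        (∫⁻ x in D, ∫⁻ y in D, ENNReal.ofReal (|v x - v y| ^ 2 / ‖x - y‖ ^ γ)) ≤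
          ENNReal.ofReal C * ∫⁻ z in D, ENNReal.ofReal (‖fderiv ℝ v z‖ ^ 2)) ∧
    (∃ Cn : ℝ, 0 < Cn ∧
      ∀ D : Set (EuclideanSpace ℝ (Fin n)), D.Nonempty → IsOpen D → Convex ℝ D →
        Bornology.IsBounded D →
        ∀ v : EuclideanSpace ℝ (Fin n) → ℝ, ContDiff ℝ (⊤ : ℕ∞) v →
          (∫⁻ x in D, ∫⁻ y in D, ENNReal.ofReal (|v x - v y| ^ 2)) ≤
            ENNReal.ofReal (Cn * (volume D).toReal * Metric.diam D ^ 2) *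
              ∫⁻ z in D, ENNReal.ofReal (‖fderiv ℝ v z‖ ^ 2)) := by
  obtain ⟨h_weighted, C, hC, h_unweighted⟩ := stmt13_general (F := ℝ) (γ := γ)
    (volume : Measure (EuclideanSpace ℝ (Fin n))) (by simpa using hγ)
  exact ⟨fun D _ ho hc hb => (h_weighted D ho hc hb).imp fun _ h =>
      h.imp_right fun hle v hv => hle v (hv.differentiable (by simp)).differentiableOn,
    C, hC, fun D _ ho hc hb v hv =>
      h_unweighted D ho hc hb v (hv.differentiable (by simp)).differentiableOn⟩
end

section
/- Let n ≥ 1, γ ∈ [0, n+2), and N ≥ 1 an integer. There exists a constant C > 0, depending only on n, N and γ, such that for every r > 0, every x₀ ∈ ℝ^n, and every smooth function v : ℝ^n → ℝ satisfying the mean value conditions ∫_{B_r(x₀)} ∂^α v(x) dx = 0 for every multi-index α with |α| ≤ N, one has ∫_{B_r(x₀)} ∫_{B_r(x₀)} |v(x) − v(y)|² / |x − y|^γ dy dx ≤ C · r^{2N − γ} · ∫_{B_r(x₀)} ∫_{B_r(x₀)} ‖∇^N v(x) − ∇^N v(y)‖² dx dy. -/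
open MeasureTheory
open scoped ENNReal
open Module Metric Set

/-!
By the fundamental theorem of calculus and Cauchy–Schwarz, `|w(x) - w(y)|²` is at most `|x - y|²`
times the mean of `|∇w|²` over the segment `[x, y]`. Freeze the parameter `t` of the point
`z = (1 - t)x + ty`. Exchanging `x` and `y` replaces `t` by `1 - t`, so that `t ≥ 1/2` may be
assumed, and then `y ↦ z` is a homothety with centre `x` and ratio in `[1/2, 1]`; substituting it
only costs a constant and leaves the kernel `|x - z|^(2 - γ)`, which is integrable exactly when
`γ < n + 2`. This bounds the energy of `w` by `r^(n + 2 - γ) ∫ |∇w|²`. The case `γ = 0` together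
with a vanishing mean is the Poincaré inequality, which is applied to `∇v, …, ∇^(N-1) v`; the
vanishing mean of `∇^N v` finally bounds `∫ |∇^N v|²` by the energy of `∇^N v` with `γ = 0`.
-/

section FiniteMeasure

variable {α : Type*} [MeasurableSpace α] {μ : Measure α}

lemma sq_lintegral_le_measure_univ_mul_lintegral_sq {f : α → ℝ≥0∞} (hf : AEMeasurable f μ) :
    (∫⁻ a, f a ∂μ) ^ 2 ≤ μ univ * ∫⁻ a, f a ^ 2 ∂μ := by
  have holder := ENNReal.lintegral_mul_le_Lp_mul_Lq μ Real.HolderConjugate.two_two hf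
    (aemeasurable_const (b := (1 : ℝ≥0∞)))
  simp only [Pi.mul_apply, mul_one, one_pow, lintegral_const, one_mul,
    ENNReal.rpow_ofNat] at holder
  have sq_sqrt (a : ℝ≥0∞) : (a ^ (1 / 2 : ℝ)) ^ 2 = a := by
    rw [← ENNReal.rpow_natCast, ← ENNReal.rpow_mul]
    norm_num
  calc
    (∫⁻ a, f a ∂μ) ^ 2
      ≤ ((∫⁻ a, f a ^ 2 ∂μ) ^ (1 / 2 : ℝ) * μ univ ^ (1 / 2 : ℝ)) ^ 2 := by gcongr
    _ = μ univ * ∫⁻ a, f a ^ 2 ∂μ := by rw [mul_pow, sq_sqrt, sq_sqrt, mul_comm]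

lemma measure_univ_mul_lintegral_enorm_sq_le_of_integral_eq_zero [IsFiniteMeasure μ]
    {F : Type*} [NormedAddCommGroup F] [NormedSpace ℝ F] [CompleteSpace F]
    {f : α → F} (hf : Integrable f μ) (hmean : ∫ a, f a ∂μ = 0) :
    μ univ * ∫⁻ a, ‖f a‖ₑ ^ 2 ∂μ ≤ ∫⁻ a, ∫⁻ b, ‖f a - f b‖ₑ ^ 2 ∂μ ∂μ := by
  rcases eq_or_ne (μ univ) 0 with hμ | hμ
  · simp only [hμ, zero_mul, zero_le]
  rw [← lintegral_const_mul' _ _ (measure_ne_top μ univ)]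
  refine lintegral_mono fun a => ?_
  have mean_sub : ∫ b, (f a - f b) ∂μ = μ.real univ • f a := by
    rw [integral_sub (integrable_const _) hf, hmean, sub_zero, integral_const]
  have enorm_le : μ univ * ‖f a‖ₑ ≤ ∫⁻ b, ‖f a - f b‖ₑ ∂μ := by
    have h := enorm_integral_le_lintegral_enorm (μ := μ) fun b => f a - f b
    rwa [mean_sub, enorm_smul, Real.enorm_eq_ofReal measureReal_nonneg, ofReal_measureReal] at h
  rw [← ENNReal.mul_le_mul_iff_right hμ (measure_ne_top μ univ)]
  calc
    μ univ * (μ univ * ‖f a‖ₑ ^ 2) = (μ univ * ‖f a‖ₑ) ^ 2 := by ring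
    _ ≤ (∫⁻ b, ‖f a - f b‖ₑ ∂μ) ^ 2 := by gcongr
    _ ≤ μ univ * ∫⁻ b, ‖f a - f b‖ₑ ^ 2 ∂μ :=
      sq_lintegral_le_measure_univ_mul_lintegral_sq
        ((integrable_const _).sub hf).aestronglyMeasurable.enorm

end FiniteMeasure

section Segment

variable {E F : Type*} [NormedAddCommGroup E] [NormedSpace ℝ E] [NormedAddCommGroup F]
  [NormedSpace ℝ F]

lemma enorm_sub_sq_le_lintegral_fderiv_lineMap {w : E → F} (hw : ContDiff ℝ 1 w) (x y : E) :
    ‖w x - w y‖ₑ ^ 2 ≤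
      ‖x - y‖ₑ ^ 2 * ∫⁻ t in Icc (0 : ℝ) 1, ‖fderiv ℝ w (AffineMap.lineMap x y t)‖ₑ ^ 2 := by
  have hfderiv : Continuous (fderiv ℝ w) := hw.continuous_fderiv one_ne_zero
  have hmeas : Measurable fun t : ℝ => ‖fderiv ℝ w (AffineMap.lineMap x y t)‖ₑ :=
    (hfderiv.comp AffineMap.lineMap_continuous).enorm.measurable
  have hderiv (t : ℝ) : deriv (fun t : ℝ => w (AffineMap.lineMap x y t)) t =
      fderiv ℝ w (AffineMap.lineMap x y t) (y - x) :=
    (((hw.differentiable one_ne_zero) _).hasFDerivAt.comp_hasDerivAt t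
      AffineMap.hasDerivAt_lineMap).deriv
  have path_le : ‖w x - w y‖ₑ ≤
      ∫⁻ t in Icc (0 : ℝ) 1, ‖fderiv ℝ w (AffineMap.lineMap x y t)‖ₑ * ‖x - y‖ₑ := by
    have hpath : ContDiff ℝ 1 fun t : ℝ => w (AffineMap.lineMap x y t) := by
      simp only [AffineMap.lineMap_apply_module']
      fun_prop
    have h := enorm_sub_le_lintegral_deriv_of_contDiffOn_Icc hpath.contDiffOn zero_le_one
    simp only [AffineMap.lineMap_apply_one, AffineMap.lineMap_apply_zero, hderiv] at h
    rw [enorm_sub_rev (w x), enorm_sub_rev x]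
    exact h.trans (lintegral_mono fun t => ContinuousLinearMap.le_opENorm _ _)
  rw [lintegral_mul_const _ hmeas] at path_le
  calc
    ‖w x - w y‖ₑ ^ 2
      ≤ ‖x - y‖ₑ ^ 2 * (∫⁻ t in Icc (0 : ℝ) 1, ‖fderiv ℝ w (AffineMap.lineMap x y t)‖ₑ) ^ 2 := by
        rw [← mul_pow, mul_comm]
        gcongr
    _ ≤ ‖x - y‖ₑ ^ 2 * ∫⁻ t in Icc (0 : ℝ) 1, ‖fderiv ℝ w (AffineMap.lineMap x y t)‖ₑ ^ 2 := by
        gcongr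
        simpa using sq_lintegral_le_measure_univ_mul_lintegral_sq
          (μ := volume.restrict (Icc (0 : ℝ) 1)) hmeas.aemeasurable

lemma ofReal_norm_sub_sq_div_rpow_le {w : E → F} (hw : ContDiff ℝ 1 w) (γ : ℝ) (x y : E) :
    ENNReal.ofReal (‖w x - w y‖ ^ 2 / ‖x - y‖ ^ γ) ≤ ‖x - y‖ₑ ^ (2 - γ) *
      ∫⁻ t in Icc (0 : ℝ) 1, ‖fderiv ℝ w (AffineMap.lineMap x y t)‖ₑ ^ 2 := by
  rcases eq_or_ne x y with rfl | hxy
  · simp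
  have hpos : 0 < ‖x - y‖ := norm_sub_pos_iff.2 hxy
  have hne : ‖x - y‖ₑ ≠ 0 := enorm_ne_zero.2 (sub_ne_zero.2 hxy)
  rw [ENNReal.ofReal_div_of_pos (by positivity), ENNReal.ofReal_pow (norm_nonneg _),
    ← ENNReal.ofReal_rpow_of_pos hpos, ofReal_norm, ofReal_norm,
    ENNReal.rpow_sub _ _ hne enorm_ne_top, ENNReal.rpow_ofNat, div_eq_mul_inv, div_eq_mul_inv,
    mul_right_comm]
  gcongr
  exact enorm_sub_sq_le_lintegral_fderiv_lineMap hw x y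

end Segment

section GagliardoEnergy

variable {E F : Type*} [NormedAddCommGroup E] [MeasurableSpace E] [NormedAddCommGroup F]
  (μ : Measure E)

/-- The Gagliardo energy `∫∫_{B × B} ‖v(x) - v(y)‖² / ‖x - y‖^γ` of `v` on `B`. The diagonal
contributes `0` whatever `γ` is, because `0 / a = 0` for every real `a`. -/
noncomputable def gagliardoEnergy (γ : ℝ) (B : Set E) (v : E → F) : ℝ≥0∞ :=
  ∫⁻ x in B, ∫⁻ y in B, ENNReal.ofReal (‖v x - v y‖ ^ 2 / ‖x - y‖ ^ γ) ∂μ ∂μ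

lemma gagliardoEnergy_zero (B : Set E) (v : E → F) :
    gagliardoEnergy μ 0 B v = ∫⁻ x in B, ∫⁻ y in B, ‖v x - v y‖ₑ ^ 2 ∂μ ∂μ := by
  simp only [gagliardoEnergy, Real.rpow_zero, div_one, ENNReal.ofReal_pow (norm_nonneg _),
    ofReal_norm]

end GagliardoEnergy

section AddHaar

variable {E : Type*} [NormedAddCommGroup E] [NormedSpace ℝ E] [FiniteDimensional ℝ E]
  [MeasurableSpace E] [BorelSpace E] (μ : Measure E) [μ.IsAddHaarMeasure]

section Kernel

lemma lintegral_comp_lineMap_s14 {c : ℝ} (hc : 0 < c) (x : E) (f : E → ℝ≥0∞) :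
    ∫⁻ y, f (AffineMap.lineMap x y c) ∂μ =
      ENNReal.ofReal c ^ (-(finrank ℝ E : ℝ)) * ∫⁻ z, f z ∂μ := by
  have jacobian : ENNReal.ofReal |(c ^ finrank ℝ E)⁻¹| =
      ENNReal.ofReal c ^ (-(finrank ℝ E : ℝ)) := by
    rw [ENNReal.ofReal_rpow_of_pos hc, Real.rpow_neg hc.le, Real.rpow_natCast,
      abs_of_pos (by positivity)]
  calc
    ∫⁻ y, f (AffineMap.lineMap x y c) ∂μ = ∫⁻ y, f (c • (y - x) + x) ∂μ := by
      simp only [AffineMap.lineMap_apply_module']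
    _ = ∫⁻ u, f (c • u + x) ∂μ := lintegral_sub_right_eq_self (fun u => f (c • u + x)) x
    _ = ∫⁻ u, f (u + x) ∂μ.map (c • ·) :=
      (MeasurableEmbedding.lintegral_map (measurableEmbedding_const_smul₀ hc.ne')
        fun u => f (u + x)).symm
    _ = ENNReal.ofReal c ^ (-(finrank ℝ E : ℝ)) * ∫⁻ z, f z ∂μ := by
      rw [Measure.map_addHaar_smul μ hc.ne', lintegral_smul_measure, smul_eq_mul, jacobian,
        lintegral_add_right_eq_self f x]

lemma setLIntegral_enorm_sub_rpow_mul_comp_lineMap {c : ℝ} (hc : 0 < c) (s : ℝ) (x : E) {B : Set E}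
    (hB : MeasurableSet B) (g : E → ℝ≥0∞) :
    ∫⁻ y in (AffineMap.lineMap x · c) ⁻¹' B, ‖x - y‖ₑ ^ s * g (AffineMap.lineMap x y c) ∂μ =
      ENNReal.ofReal c ^ (-(finrank ℝ E + s)) * ∫⁻ z in B, ‖x - z‖ₑ ^ s * g z ∂μ := by
  have hc0 : ENNReal.ofReal c ≠ 0 := (ENNReal.ofReal_pos.2 hc).ne'
  have hcont : Continuous fun y : E => AffineMap.lineMap x y c := by
    simp only [AffineMap.lineMap_apply_module']
    fun_prop
  have kernel_comp (y : E) :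
      ‖x - y‖ₑ ^ s = ENNReal.ofReal c ^ (-s) * ‖x - AffineMap.lineMap x y c‖ₑ ^ s := by
    have hsub : x - AffineMap.lineMap x y c = c • (x - y) := by
      rw [AffineMap.lineMap_apply_module']
      module
    rw [hsub, enorm_smul, Real.enorm_eq_ofReal hc.le,
      ENNReal.mul_rpow_of_ne_top ENNReal.ofReal_ne_top enorm_ne_top, ← mul_assoc,
      ← ENNReal.rpow_add _ _ hc0 ENNReal.ofReal_ne_top, neg_add_cancel, ENNReal.rpow_zero, one_mul]
  have hrpow : ENNReal.ofReal c ^ (-s) ≠ ∞ :=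
    ENNReal.rpow_ne_top_of_ne_zero hc0 ENNReal.ofReal_ne_top
  rw [← lintegral_indicator (hcont.measurable hB), ← lintegral_indicator hB]
  calc
    _ = ∫⁻ y, ENNReal.ofReal c ^ (-s) *
          B.indicator (fun z => ‖x - z‖ₑ ^ s * g z) (AffineMap.lineMap x y c) ∂μ := by
        refine lintegral_congr fun y => ?_
        by_cases hy : AffineMap.lineMap x y c ∈ B <;> simp [hy, kernel_comp y, mul_assoc]
    _ = _ := by
        rw [lintegral_const_mul' _ _ hrpow, lintegral_comp_lineMap_s14 μ hc, ← mul_assoc,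
          ← ENNReal.rpow_add _ _ hc0 ENNReal.ofReal_ne_top]
        congr 2
        ring

lemma setLIntegral_ball_enorm_rpow {R : ℝ} (hR : 0 < R) (s : ℝ) :
    ∫⁻ u in ball 0 R, ‖u‖ₑ ^ s ∂μ =
      ENNReal.ofReal R ^ (finrank ℝ E + s) * ∫⁻ u in ball 0 1, ‖u‖ₑ ^ s ∂μ := by
  have hball : (AffineMap.lineMap (0 : E) · R⁻¹) ⁻¹' ball 0 1 = ball 0 R := by
    ext u
    simp [AffineMap.lineMap_apply_module', norm_smul, abs_of_pos hR, inv_mul_lt_iff₀ hR]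
  have h := setLIntegral_enorm_sub_rpow_mul_comp_lineMap μ (inv_pos.2 hR) s 0
    (measurableSet_ball (x := (0 : E)) (ε := 1)) 1
  simp only [hball, zero_sub, enorm_neg, Pi.one_apply, mul_one] at h
  rw [h, ENNReal.ofReal_inv_of_pos hR, ENNReal.inv_rpow, ENNReal.rpow_neg, inv_inv]

lemma setLIntegral_ball_enorm_rpow_lt_top [Nontrivial E] {s : ℝ} (hs : -(finrank ℝ E : ℝ) < s)
    (R : ℝ) : ∫⁻ u in ball 0 R, ‖u‖ₑ ^ s ∂μ < ∞ := by
  have hint : IntegrableOn (fun u : E => ‖u‖ ^ s) (ball 0 R) μ := by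
    refine integrableOn_ball_of_norm_le_rpow finrank_pos (C := 1) (α := -s) (by linarith)
      (ae_of_all _ fun u => ?_) (by fun_prop : Measurable fun u : E => ‖u‖ ^ s).aestronglyMeasurable
    rw [neg_neg, one_mul, Real.norm_of_nonneg (by positivity)]
  refine (lintegral_congr_ae ?_).trans_lt hint.hasFiniteIntegral
  filter_upwards [ae_restrict_of_ae (Measure.ae_ne μ (0 : E))] with u hu
  rw [← ofReal_norm (‖u‖ ^ s), Real.norm_of_nonneg (by positivity),
    ← ENNReal.ofReal_rpow_of_pos (norm_pos_iff.2 hu), ofReal_norm]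

lemma lintegral_lintegral_enorm_sub_rpow_mul_le {B : Set E} (hB : MeasurableSet B) {R : ℝ}
    (hBR : ∀ z ∈ B, B ⊆ ball z R) (s : ℝ) {g : E → ℝ≥0∞} (hg : Measurable g) :
    ∫⁻ x in B, ∫⁻ z in B, ‖x - z‖ₑ ^ s * g z ∂μ ∂μ ≤
      (∫⁻ u in ball 0 R, ‖u‖ₑ ^ s ∂μ) * ∫⁻ z in B, g z ∂μ := by
  rw [lintegral_lintegral_swap (by fun_prop), ← lintegral_const_mul _ hg]
  refine setLIntegral_mono' hB fun z hz => ?_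
  rw [lintegral_mul_const _ (by fun_prop)]
  gcongr ?_ * _
  calc
    ∫⁻ x in B, ‖x - z‖ₑ ^ s ∂μ ≤ ∫⁻ x in (· - z) ⁻¹' ball 0 R, ‖x - z‖ₑ ^ s ∂μ := by
      refine lintegral_mono_set fun x hx => ?_
      simpa [dist_eq_norm] using hBR z hz hx
    _ = ∫⁻ u in ball 0 R, ‖u‖ₑ ^ s ∂μ :=
      (measurePreserving_sub_right μ z).setLIntegral_comp_preimage measurableSet_ball
        (measurable_enorm.pow_const s)

lemma lintegral_lintegral_lineMap_le_of_half_le {B : Set E} (hB : MeasurableSet B)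
    (hconv : Convex ℝ B) {s : ℝ} (hs : 0 ≤ finrank ℝ E + s) (g : E → ℝ≥0∞) {t : ℝ}
    (ht : t ∈ Icc (1 / 2) 1) :
    ∫⁻ x in B, ∫⁻ y in B, ‖x - y‖ₑ ^ s * g (AffineMap.lineMap x y t) ∂μ ∂μ ≤
      2 ^ (finrank ℝ E + s) * ∫⁻ x in B, ∫⁻ z in B, ‖x - z‖ₑ ^ s * g z ∂μ ∂μ := by
  have ht0 : 0 < t := by linarith [ht.1]
  rw [← lintegral_const_mul' _ _ (ENNReal.rpow_ne_top_of_nonneg hs ENNReal.ofNat_ne_top)]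
  refine setLIntegral_mono' hB fun x hx => ?_
  calc
    ∫⁻ y in B, ‖x - y‖ₑ ^ s * g (AffineMap.lineMap x y t) ∂μ
      ≤ ∫⁻ y in (AffineMap.lineMap x · t) ⁻¹' B,
          ‖x - y‖ₑ ^ s * g (AffineMap.lineMap x y t) ∂μ :=
        lintegral_mono_set fun y hy => hconv.lineMap_mem hx hy ⟨ht0.le, ht.2⟩
    _ = ENNReal.ofReal t ^ (-(finrank ℝ E + s)) * ∫⁻ z in B, ‖x - z‖ₑ ^ s * g z ∂μ :=
        setLIntegral_enorm_sub_rpow_mul_comp_lineMap μ ht0 s x hB g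
    _ ≤ 2 ^ (finrank ℝ E + s) * ∫⁻ z in B, ‖x - z‖ₑ ^ s * g z ∂μ := by
        rw [ENNReal.rpow_neg, ← ENNReal.inv_rpow, ← ENNReal.ofReal_inv_of_pos ht0]
        gcongr
        rw [ENNReal.ofReal_le_ofNat, inv_le_comm₀ ht0 two_pos]
        simpa using ht.1

lemma lintegral_lintegral_lineMap_le {B : Set E} (hB : MeasurableSet B) (hconv : Convex ℝ B)
    {s : ℝ} (hs : 0 ≤ finrank ℝ E + s) {g : E → ℝ≥0∞} (hg : Measurable g) {t : ℝ}
    (ht : t ∈ Icc 0 1) :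
    ∫⁻ x in B, ∫⁻ y in B, ‖x - y‖ₑ ^ s * g (AffineMap.lineMap x y t) ∂μ ∂μ ≤
      2 ^ (finrank ℝ E + s) * ∫⁻ x in B, ∫⁻ z in B, ‖x - z‖ₑ ^ s * g z ∂μ ∂μ := by
  rcases le_total (1 / 2) t with h | h
  · exact lintegral_lintegral_lineMap_le_of_half_le μ hB hconv hs g ⟨h, ht.2⟩
  · have hmeas : Measurable fun p : E × E =>
        ‖p.1 - p.2‖ₑ ^ s * g (AffineMap.lineMap p.1 p.2 t) := by
      simp only [AffineMap.lineMap_apply_module']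
      fun_prop
    have hswap : ∫⁻ x in B, ∫⁻ y in B, ‖x - y‖ₑ ^ s * g (AffineMap.lineMap x y t) ∂μ ∂μ =
        ∫⁻ x in B, ∫⁻ y in B, ‖x - y‖ₑ ^ s * g (AffineMap.lineMap x y (1 - t)) ∂μ ∂μ := by
      rw [lintegral_lintegral_swap hmeas.aemeasurable]
      simp only [AffineMap.lineMap_apply_one_sub, enorm_sub_rev]
    rw [hswap]
    exact lintegral_lintegral_lineMap_le_of_half_le μ hB hconv hs g
      ⟨by linarith, by linarith [ht.1]⟩

end Kernel

variable {F : Type*} [NormedAddCommGroup F] [NormedSpace ℝ F]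

section GradientBound

lemma gagliardoEnergy_le_of_convex {γ : ℝ} (hγ : γ ≤ finrank ℝ E + 2) {B : Set E}
    (hB : MeasurableSet B) (hconv : Convex ℝ B) {R : ℝ} (hBR : ∀ z ∈ B, B ⊆ ball z R) {w : E → F}
    (hw : ContDiff ℝ 1 w) :
    gagliardoEnergy μ γ B w ≤ 2 ^ (finrank ℝ E + (2 - γ)) *
      ((∫⁻ u in ball 0 R, ‖u‖ₑ ^ (2 - γ) ∂μ) * ∫⁻ z in B, ‖fderiv ℝ w z‖ₑ ^ 2 ∂μ) := by
  set g : E → ℝ≥0∞ := fun z => ‖fderiv ℝ w z‖ₑ ^ 2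
  have hg : Measurable g := (hw.continuous_fderiv one_ne_zero).enorm.measurable.pow_const 2
  have hmeas : Measurable fun p : (E × E) × ℝ =>
      ‖p.1.1 - p.1.2‖ₑ ^ (2 - γ) * g (AffineMap.lineMap p.1.1 p.1.2 p.2) := by
    simp only [AffineMap.lineMap_apply_module']
    fun_prop
  calc
    gagliardoEnergy μ γ B w
      ≤ ∫⁻ x in B, ∫⁻ y in B, (∫⁻ t in Icc (0 : ℝ) 1,
          ‖x - y‖ₑ ^ (2 - γ) * g (AffineMap.lineMap x y t)) ∂μ ∂μ := by
        refine lintegral_mono fun x => lintegral_mono fun y => ?_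
        have hg_line : Measurable fun t : ℝ => g (AffineMap.lineMap x y t) :=
          hg.comp AffineMap.lineMap_continuous.measurable
        rw [lintegral_const_mul _ hg_line]
        exact ofReal_norm_sub_sq_div_rpow_le hw γ x y
    _ = ∫⁻ x in B, (∫⁻ t in Icc (0 : ℝ) 1, ∫⁻ y in B,
          ‖x - y‖ₑ ^ (2 - γ) * g (AffineMap.lineMap x y t) ∂μ) ∂μ :=
        lintegral_congr fun x => lintegral_lintegral_swap
          (hmeas.comp (by fun_prop : Measurable fun q : E × ℝ => ((x, q.1), q.2))).aemeasurable
    _ = ∫⁻ t in Icc (0 : ℝ) 1, ∫⁻ x in B, ∫⁻ y in B,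
          ‖x - y‖ₑ ^ (2 - γ) * g (AffineMap.lineMap x y t) ∂μ ∂μ :=
        lintegral_lintegral_swap (Measurable.lintegral_prod_right' (hmeas.comp
          (by fun_prop : Measurable fun q : (E × ℝ) × E => ((q.1.1, q.2), q.1.2)))).aemeasurable
    _ ≤ ∫⁻ _ in Icc (0 : ℝ) 1, 2 ^ (finrank ℝ E + (2 - γ)) *
          ∫⁻ x in B, ∫⁻ z in B, ‖x - z‖ₑ ^ (2 - γ) * g z ∂μ ∂μ :=
        setLIntegral_mono' measurableSet_Icc fun t ht =>
          lintegral_lintegral_lineMap_le μ hB hconv (by linarith) hg ht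
    _ = 2 ^ (finrank ℝ E + (2 - γ)) *
          ∫⁻ x in B, ∫⁻ z in B, ‖x - z‖ₑ ^ (2 - γ) * g z ∂μ ∂μ := by simp
    _ ≤ _ := by
        gcongr
        exact lintegral_lintegral_enorm_sub_rpow_mul_le μ hB hBR _ hg

/-- The constant in the bound of the Gagliardo energy on `B_r` by
`r ^ (n + 2 - γ) * ∫_{B_r} ‖∇w‖²`. One factor `2 ^ (n + 2 - γ)` comes from the homotheties of
ratio at least `1 / 2`, the other from the inclusion of `B_r - B_r` in the ball of radius `2r`. -/
noncomputable def gradientConst (γ : ℝ) : ℝ≥0∞ :=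
  2 ^ (finrank ℝ E + (2 - γ)) *
    (2 ^ (finrank ℝ E + (2 - γ)) * ∫⁻ u in ball (0 : E) 1, ‖u‖ₑ ^ (2 - γ) ∂μ)

lemma gradientConst_ne_top [Nontrivial E] {γ : ℝ} (hγ : γ < finrank ℝ E + 2) :
    gradientConst μ γ ≠ ∞ := by
  have hpow : (2 : ℝ≥0∞) ^ (finrank ℝ E + (2 - γ)) ≠ ∞ :=
    ENNReal.rpow_ne_top_of_nonneg (by linarith) ENNReal.ofNat_ne_top
  exact ENNReal.mul_ne_top hpow <| ENNReal.mul_ne_top hpow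
    (setLIntegral_ball_enorm_rpow_lt_top μ (by linarith) 1).ne

lemma gagliardoEnergy_ball_le {γ : ℝ} (hγ : γ ≤ finrank ℝ E + 2) {r : ℝ} (hr : 0 < r) (x₀ : E)
    {w : E → F} (hw : ContDiff ℝ 1 w) :
    gagliardoEnergy μ γ (ball x₀ r) w ≤
      gradientConst μ γ * ENNReal.ofReal r ^ (finrank ℝ E + (2 - γ)) *
        ∫⁻ x in ball x₀ r, ‖fderiv ℝ w x‖ₑ ^ 2 ∂μ := by
  have hsubset : ∀ z ∈ ball x₀ r, ball x₀ r ⊆ ball z (2 * r) := fun z hz =>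
    ball_subset_ball' (by linarith [mem_ball'.1 hz])
  refine (gagliardoEnergy_le_of_convex μ hγ measurableSet_ball (convex_ball x₀ r) hsubset
    hw).trans_eq ?_
  rw [setLIntegral_ball_enorm_rpow μ (by positivity), ENNReal.ofReal_mul two_pos.le,
    ENNReal.ofReal_ofNat, ENNReal.mul_rpow_of_ne_top ENNReal.ofNat_ne_top ENNReal.ofReal_ne_top,
    gradientConst]
  ring

end GradientBound

section Poincare

variable [CompleteSpace F]

lemma setLIntegral_ball_enorm_sq_le_gagliardoEnergy {r : ℝ} (hr : 0 < r) {x₀ : E} {w : E → F}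
    (hw : Continuous w) (hmean : ∫ x in ball x₀ r, w x ∂μ = 0) :
    ∫⁻ x in ball x₀ r, ‖w x‖ₑ ^ 2 ∂μ ≤
      (μ (ball 0 1))⁻¹ * ENNReal.ofReal r ^ (-(finrank ℝ E : ℝ)) *
        gagliardoEnergy μ 0 (ball x₀ r) w := by
  have hint : IntegrableOn w (ball x₀ r) μ :=
    (hw.continuousOn.integrableOn_compact (isCompact_closedBall x₀ r)).mono_set
      ball_subset_closedBall
  have hfinite : IsFiniteMeasure (μ.restrict (ball x₀ r)) :=
    isFiniteMeasure_restrict.2 measure_ball_lt_top.ne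
  have hvol : (μ (ball x₀ r))⁻¹ =
      (μ (ball 0 1))⁻¹ * ENNReal.ofReal r ^ (-(finrank ℝ E : ℝ)) := by
    rw [Measure.addHaar_ball_of_pos μ x₀ hr, ENNReal.ofReal_pow hr.le, mul_comm,
      ENNReal.mul_inv (.inr (by finiteness)) (.inr (by positivity)), ENNReal.rpow_neg,
      ENNReal.rpow_natCast]
  have h := measure_univ_mul_lintegral_enorm_sq_le_of_integral_eq_zero hint hmean
  rw [Measure.restrict_apply_univ, ← gagliardoEnergy_zero] at h
  rwa [← hvol, mul_comm, ← div_eq_mul_inv, ENNReal.le_div_iff_mul_le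
    (.inl (measure_ball_pos μ x₀ hr).ne') (.inl measure_ball_lt_top.ne), mul_comm]

/-- The constant in the Poincaré inequality `∫_{B_r} ‖w‖² ≤ C * r² * ∫_{B_r} ‖∇w‖²` for `w` of
vanishing mean. -/
noncomputable def poincareConst : ℝ≥0∞ :=
  (μ (ball 0 1))⁻¹ * gradientConst μ 0

lemma poincareConst_ne_top [Nontrivial E] : poincareConst μ ≠ ∞ :=
  ENNReal.mul_ne_top (ENNReal.inv_ne_top.2 (measure_ball_pos μ 0 one_pos).ne')
    (gradientConst_ne_top μ (by positivity))

theorem poincare_inequality_ball {r : ℝ} (hr : 0 < r) {x₀ : E} {w : E → F} (hw : ContDiff ℝ 1 w)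
    (hmean : ∫ x in ball x₀ r, w x ∂μ = 0) :
    ∫⁻ x in ball x₀ r, ‖w x‖ₑ ^ 2 ∂μ ≤
      poincareConst μ * ENNReal.ofReal r ^ 2 * ∫⁻ x in ball x₀ r, ‖fderiv ℝ w x‖ₑ ^ 2 ∂μ := by
  have hr0 : ENNReal.ofReal r ≠ 0 := (ENNReal.ofReal_pos.2 hr).ne'
  have hpow : ENNReal.ofReal r ^ 2 = ENNReal.ofReal r ^ (-(finrank ℝ E : ℝ)) *
      ENNReal.ofReal r ^ (finrank ℝ E + (2 - (0 : ℝ))) := by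
    rw [← ENNReal.rpow_add _ _ hr0 ENNReal.ofReal_ne_top, ← ENNReal.rpow_ofNat]
    congr 1
    ring
  refine (setLIntegral_ball_enorm_sq_le_gagliardoEnergy μ hr hw.continuous hmean).trans ?_
  refine (mul_le_mul_right (gagliardoEnergy_ball_le μ (by positivity) hr x₀ hw) _).trans_eq ?_
  rw [poincareConst, hpow]
  ring

lemma setLIntegral_ball_enorm_iteratedFDeriv_sq_le {r : ℝ} (hr : 0 < r) {x₀ : E} {v : E → F}
    (j m : ℕ) (hv : ContDiff ℝ (j + m : ℕ) v)
    (hmean : ∀ k, j ≤ k → k < j + m → ∫ x in ball x₀ r, iteratedFDeriv ℝ k v x ∂μ = 0) :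
    ∫⁻ x in ball x₀ r, ‖iteratedFDeriv ℝ j v x‖ₑ ^ 2 ∂μ ≤
      (poincareConst μ * ENNReal.ofReal r ^ 2) ^ m *
        ∫⁻ x in ball x₀ r, ‖iteratedFDeriv ℝ (j + m) v x‖ₑ ^ 2 ∂μ := by
  induction m with
  | zero => simp
  | succ m ih =>
    have hC1 : ContDiff ℝ 1 (iteratedFDeriv ℝ (j + m) v) :=
      hv.iteratedFDeriv_right (by norm_cast; omega)
    have hderiv (x : E) : ‖fderiv ℝ (iteratedFDeriv ℝ (j + m) v) x‖ₑ =
        ‖iteratedFDeriv ℝ (j + m + 1) v x‖ₑ := by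
      rw [← ofReal_norm, norm_fderiv_iteratedFDeriv, ofReal_norm]
    have hpoincare := poincare_inequality_ball μ hr hC1 (hmean (j + m) (by omega) (by omega))
    simp only [hderiv] at hpoincare
    refine (ih (hv.of_le (by norm_cast; omega)) fun k hjk hk => hmean k hjk (by omega)).trans ?_
    rw [pow_succ _ m, mul_assoc]
    gcongr
    exact hpoincare

end Poincare

theorem gagliardoEnergy_le_gagliardoEnergy_iteratedFDeriv [CompleteSpace F] {γ : ℝ}
    (hγ : γ ≤ finrank ℝ E + 2) {r : ℝ} (hr : 0 < r) {x₀ : E} {v : E → F} (m : ℕ)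
    (hv : ContDiff ℝ (m + 1 : ℕ) v)
    (hmean : ∀ k, 1 ≤ k → k ≤ m + 1 → ∫ x in ball x₀ r, iteratedFDeriv ℝ k v x ∂μ = 0) :
    gagliardoEnergy μ γ (ball x₀ r) v ≤
      gradientConst μ γ * poincareConst μ ^ m * (μ (ball 0 1))⁻¹ *
        ENNReal.ofReal r ^ (2 * ((m + 1 : ℕ) : ℝ) - γ) *
          gagliardoEnergy μ 0 (ball x₀ r) (iteratedFDeriv ℝ (m + 1) v) := by
  have hr0 : ENNReal.ofReal r ≠ 0 := (ENNReal.ofReal_pos.2 hr).ne'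
  have hpow : ENNReal.ofReal r ^ (2 * ((m + 1 : ℕ) : ℝ) - γ) =
      ENNReal.ofReal r ^ (finrank ℝ E + (2 - γ)) * (ENNReal.ofReal r ^ 2) ^ m *
        ENNReal.ofReal r ^ (-(finrank ℝ E : ℝ)) := by
    rw [← pow_mul, ← ENNReal.rpow_natCast, ← ENNReal.rpow_add _ _ hr0 ENNReal.ofReal_ne_top,
      ← ENNReal.rpow_add _ _ hr0 ENNReal.ofReal_ne_top]
    congr 1
    push_cast
    ring
  have hfderiv (x : E) : ‖fderiv ℝ v x‖ₑ = ‖iteratedFDeriv ℝ 1 v x‖ₑ := by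
    rw [← ofReal_norm, ← norm_iteratedFDeriv_one, ofReal_norm]
  have gradient_bound := gagliardoEnergy_ball_le μ hγ hr x₀ (hv.of_le (by norm_cast; omega))
  simp only [hfderiv] at gradient_bound
  have iterated_poincare := setLIntegral_ball_enorm_iteratedFDeriv_sq_le μ hr 1 m
    (by rwa [add_comm]) fun k hk hkm => hmean k hk (by omega)
  rw [add_comm 1 m] at iterated_poincare
  have top_order := setLIntegral_ball_enorm_sq_le_gagliardoEnergy μ hr
    (hv.continuous_iteratedFDeriv le_rfl) (hmean (m + 1) (by omega) le_rfl)
  refine gradient_bound.trans ((mul_le_mul_right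
    (iterated_poincare.trans (mul_le_mul_right top_order _)) _).trans_eq ?_)
  rw [hpow]
  ring

theorem stmt14_general [Nontrivial E] [CompleteSpace F] {γ : ℝ} (hγ : γ < finrank ℝ E + 2) {N : ℕ}
    (hN : 1 ≤ N) :
    ∃ C : ℝ, 0 < C ∧ ∀ r : ℝ, 0 < r → ∀ (x₀ : E) (v : E → F), ContDiff ℝ N v →
      (∀ k : ℕ, 1 ≤ k → k ≤ N → ∫ x in ball x₀ r, iteratedFDeriv ℝ k v x ∂μ = 0) →
      gagliardoEnergy μ γ (ball x₀ r) v ≤ ENNReal.ofReal (C * r ^ (2 * (N : ℝ) - γ)) *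
        gagliardoEnergy μ 0 (ball x₀ r) (iteratedFDeriv ℝ N v) := by
  obtain ⟨m, rfl⟩ := Nat.exists_eq_add_of_le' hN
  set C : ℝ≥0∞ := gradientConst μ γ * poincareConst μ ^ m * (μ (ball 0 1))⁻¹
  have hC : C ≠ ∞ := ENNReal.mul_ne_top
    (ENNReal.mul_ne_top (gradientConst_ne_top μ hγ) (ENNReal.pow_ne_top (poincareConst_ne_top μ)))
    (ENNReal.inv_ne_top.2 (measure_ball_pos μ 0 one_pos).ne')
  refine ⟨C.toReal + 1, by positivity, fun r hr x₀ v hv hmean => ?_⟩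
  refine (gagliardoEnergy_le_gagliardoEnergy_iteratedFDeriv μ hγ.le hr m hv hmean).trans ?_
  rw [ENNReal.ofReal_mul (by positivity), ← ENNReal.ofReal_rpow_of_pos hr]
  gcongr
  exact ENNReal.le_ofReal_iff_toReal_le hC (by positivity) |>.2 (by linarith)

end AddHaar

/-- Let `γ ∈ [0, n+2)` and `N ≥ 1`. There is `C > 0` depending only on `n, N, γ` such
that for every ball `B_r(x₀)` and every smooth `v` whose derivatives of all orders
`≤ N` have vanishing mean over `B_r(x₀)`,
`∫∫_{B_r(x₀)²} |v(x)−v(y)|²/|x−y|^γ ≤ C r^{2N−γ} ∫∫_{B_r(x₀)²} ‖∇^N v(x) − ∇^N v(y)‖²`. -/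
theorem stmt14 (n : ℕ) (hn : 1 ≤ n) (γ : ℝ) (hγ0 : 0 ≤ γ) (hγ : γ < (n : ℝ) + 2)
    (N : ℕ) (hN : 1 ≤ N) :
    ∃ C : ℝ, 0 < C ∧
      ∀ (r : ℝ), 0 < r → ∀ (x₀ : EuclideanSpace ℝ (Fin n))
        (v : EuclideanSpace ℝ (Fin n) → ℝ), ContDiff ℝ (⊤ : ℕ∞) v →
        (∀ k : ℕ, k ≤ N → (∫ x in Metric.ball x₀ r, iteratedFDeriv ℝ k v x) = 0) →
        (∫⁻ x in Metric.ball x₀ r, ∫⁻ y in Metric.ball x₀ r,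
            ENNReal.ofReal (|v x - v y| ^ 2 / ‖x - y‖ ^ γ)) ≤
          ENNReal.ofReal (C * r ^ (2 * (N : ℝ) - γ)) *
            ∫⁻ x in Metric.ball x₀ r, ∫⁻ y in Metric.ball x₀ r,
              ENNReal.ofReal (‖iteratedFDeriv ℝ N v x - iteratedFDeriv ℝ N v y‖ ^ 2) := by
  have : Nonempty (Fin n) := ⟨⟨0, hn⟩⟩
  obtain ⟨C, hC, henergy⟩ := stmt14_general (E := EuclideanSpace ℝ (Fin n)) (F := ℝ) volume
    (γ := γ) (by rwa [finrank_euclideanSpace_fin]) hN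
  refine ⟨C, hC, fun r hr x₀ v hv hmean => ?_⟩
  simpa only [gagliardoEnergy, Real.rpow_zero, div_one, Real.norm_eq_abs] using
    henergy r hr x₀ v (hv.of_le (by exact_mod_cast le_top)) fun k _ hk => hmean k hk
end
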